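/- arXiv:2603.21347 — 4 statements merged into one kernel-verified Lean document; each statement's English description precedes it below -/
import Mathlib

section
/- Let S be a nonempty compact Hausdorff topological semigroup, i.e., a nonempty compact Hausdorff space equipped with an associative multiplication that is jointly continuous. Then there exists an idempotent e ∈ S (e·e = e) such that the set eSe = {e·s·e | s ∈ S} is a group under the semigroup multiplication with identity element e; in particular, for every x ∈ eSe there exists y ∈ eSe with x·y = e and y·x = e. -/
/-- A semigroup with a nonempty compact topology has a minimal nonempty closed right ideal. -/
theorem exists_minimal_isClosed_right_ideal (S : Type*) [Semigroup S] [TopologicalSpace S]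
    [CompactSpace S] [Nonempty S] :
    ∃ R : Set S, Minimal
      (· ∈ {R : Set S | IsClosed R ∧ R.Nonempty ∧ ∀ r ∈ R, ∀ s, r * s ∈ R}) R := by
  have hzorn := zorn_superset_nonempty
    {R : Set S | IsClosed R ∧ R.Nonempty ∧ ∀ r ∈ R, ∀ s, r * s ∈ R} fun c hc hchain hne => ?_
  · obtain ⟨R, -, hR⟩ := hzorn Set.univ
      ⟨isClosed_univ, Set.univ_nonempty, fun _ _ _ => Set.mem_univ _⟩
    exact ⟨R, hR⟩
  · refine ⟨⋂₀ c, ⟨isClosed_sInter fun t ht => (hc ht).1, ?_, fun r hr s t ht =>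
      (hc ht).2.2 r (hr t ht) s⟩, fun t ht => Set.sInter_subset_of_mem ht⟩
    have : Nonempty c := hne.to_subtype
    have hdir : DirectedOn (· ⊇ ·) c := fun s hs t ht =>
      (hchain.total hs ht).elim (fun h => ⟨s, hs, subset_rfl, h⟩) fun h => ⟨t, ht, h, subset_rfl⟩
    exact IsCompact.nonempty_sInter_of_directed_nonempty_isCompact_isClosed hdir
      (fun t ht => (hc ht).2.1) (fun t ht => (hc ht).1.isCompact) (fun t ht => (hc ht).1)

/-- If `R` is a minimal closed right ideal of a compact Hausdorff topological semigroup, then left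
multiplication by an element of `R` maps `R` onto `R`. -/
theorem exists_mul_eq_of_minimal_right_ideal {S : Type*} [Semigroup S] [TopologicalSpace S]
    [CompactSpace S] [T2Space S] [ContinuousMul S] {R : Set S}
    (hR : Minimal (· ∈ {R : Set S | IsClosed R ∧ R.Nonempty ∧ ∀ r ∈ R, ∀ s, r * s ∈ R}) R)
    {x y : S} (hx : x ∈ R) (hy : y ∈ R) : ∃ r ∈ R, x * r = y := by
  obtain ⟨hclosed, hne, hmul⟩ := hR.prop
  refine hR.le_of_le (y := (x * ·) '' R) ⟨?_, hne.image _, ?_⟩ ?_ hy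
  · exact (hclosed.isCompact.image (continuous_const_mul x)).isClosed
  · rintro _ ⟨r, hr, rfl⟩ s
    exact ⟨r * s, hmul r hr s, (mul_assoc x r s).symm⟩
  · rintro _ ⟨r, -, rfl⟩
    exact hmul x hx r

/-- Every nonempty compact Hausdorff topological semigroup contains an
idempotent `e` such that the corner `eSe = {e*s*e | s ∈ S}` is a group under
the semigroup multiplication with identity `e`: it is closed under
multiplication, `e` is a two-sided identity on it, and every element of `eSe`
has a two-sided inverse in `eSe`. -/
theorem stmt2 {S : Type*} [Semigroup S] [TopologicalSpace S] [CompactSpace S]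
    [T2Space S] [ContinuousMul S] [Nonempty S] :
    ∃ e : S, e * e = e ∧
      (∀ x ∈ {z : S | ∃ s : S, z = e * s * e},
        ∀ y ∈ {z : S | ∃ s : S, z = e * s * e},
          x * y ∈ {z : S | ∃ s : S, z = e * s * e}) ∧
      (∀ x ∈ {z : S | ∃ s : S, z = e * s * e}, e * x = x ∧ x * e = x) ∧
      ∀ x ∈ {z : S | ∃ s : S, z = e * s * e},
        ∃ y ∈ {z : S | ∃ s : S, z = e * s * e}, x * y = e ∧ y * x = e := by
  obtain ⟨R, hR⟩ := exists_minimal_isClosed_right_ideal S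
  obtain ⟨hclosed, hne, hmul⟩ := hR.prop
  obtain ⟨e, heR, he⟩ := exists_idempotent_in_compact_subsemigroup
    (fun r : S => continuous_mul_const r) R hne hclosed.isCompact fun x hx y _ => hmul x hx y
  have hid : ∀ x ∈ {z : S | ∃ s : S, z = e * s * e}, e * x = x ∧ x * e = x := by
    rintro _ ⟨s, rfl⟩
    exact ⟨by rw [← mul_assoc, ← mul_assoc, he], by rw [mul_assoc, he]⟩
  have hinv : ∀ x ∈ {z : S | ∃ s : S, z = e * s * e},
      ∃ y ∈ {z : S | ∃ s : S, z = e * s * e}, x * y = e := by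
    intro x hx
    have hxR : x ∈ R := by
      rw [← (hid x hx).1]
      exact hmul e heR x
    obtain ⟨r, -, hr⟩ := exists_mul_eq_of_minimal_right_ideal hR hxR heR
    exact ⟨e * r * e, ⟨r, rfl⟩, by rw [← mul_assoc, ← mul_assoc, (hid x hx).2, hr, he]⟩
  refine ⟨e, he, ?_, hid, fun x hx => ?_⟩
  · rintro _ ⟨s, rfl⟩ _ ⟨t, rfl⟩
    exact ⟨s * e * (e * t), by simp only [mul_assoc]⟩
  · obtain ⟨y, hy, hxy⟩ := hinv x hx
    obtain ⟨z, hz, hyz⟩ := hinv y hy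
    have hzx : z = x := by
      rw [← (hid z hz).1, ← hxy, mul_assoc, hyz, (hid x hx).2]
    exact ⟨y, hy, hxy, hzx ▸ hyz⟩
end

section
/- Let V and W be real vector spaces, let B : V × W → ℝ be a bilinear map, let u ∈ V, u' ∈ W, and let e₀, e₁ ∈ V and f₀, f₁ ∈ W. Suppose: (i) B(u, u') = 1; (ii) for all i, j ∈ {0,1}, each of B(eᵢ, fⱼ), B(u − eᵢ, fⱼ), B(eᵢ, u' − fⱼ), B(u − eᵢ, u' − fⱼ) is nonnegative; (iii) B(2eᵢ − u, 2fⱼ − u') = (−1)^{i·j} for all i, j ∈ {0,1}. Then B(eᵢ, u') = 1/2 and B(u, fⱼ) = 1/2 for all i, j ∈ {0,1}. -/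
/-- Any instance of the CHSH scenario achieving the algebraically maximal CHSH
value `4` (all correlators equal to `(-1)^{ij}`) automatically has uniform
marginals. -/
theorem stmt4 {V W : Type*} [AddCommGroup V] [Module ℝ V] [AddCommGroup W]
    [Module ℝ W] (B : V →ₗ[ℝ] W →ₗ[ℝ] ℝ) (u : V) (u' : W)
    (e : Fin 2 → V) (f : Fin 2 → W)
    (h1 : B u u' = 1)
    (h2 : ∀ i j : Fin 2, 0 ≤ B (e i) (f j) ∧ 0 ≤ B (u - e i) (f j) ∧
      0 ≤ B (e i) (u' - f j) ∧ 0 ≤ B (u - e i) (u' - f j))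
    (h3 : ∀ i j : Fin 2, B (2 • e i - u) (2 • f j - u') =
      (-1 : ℝ) ^ ((i : ℕ) * (j : ℕ))) :
    (∀ i : Fin 2, B (e i) u' = 1 / 2) ∧ (∀ j : Fin 2, B u (f j) = 1 / 2) := by
  have h00 := h2 0 0
  have h01 := h2 0 1
  have h10 := h2 1 0
  have h11 := h2 1 1
  have c00 := h3 0 0
  have c01 := h3 0 1
  have c10 := h3 1 0
  have c11 := h3 1 1
  simp only [map_sub, map_nsmul, LinearMap.sub_apply, LinearMap.smul_apply, nsmul_eq_mul,
    Nat.cast_ofNat, h1, Fin.val_zero, Fin.val_one, mul_zero, mul_one, pow_zero,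
    pow_one] at h00 h01 h10 h11 c00 c01 c10 c11
  obtain ⟨_, _, _, _⟩ := h00
  obtain ⟨_, _, _, _⟩ := h01
  obtain ⟨_, _, _, _⟩ := h10
  obtain ⟨_, _, _, _⟩ := h11
  refine ⟨Fin.forall_fin_two.2 ⟨?_, ?_⟩, Fin.forall_fin_two.2 ⟨?_, ?_⟩⟩ <;> linarith
end

section
/- Let n₁, n₂, n₃, n₄, n₅ be nonnegative integers satisfying: n₁ = 1; n₁ + n₂ + n₃ + n₄ + 2n₅ ≥ 3; n₁ + n₂ − n₃ − n₄ ≥ 0; n₁ + n₂ + n₃ + n₄ − 2n₅ ≥ 0; n₁ − n₂ + n₃ − n₄ ≥ 0; n₁ − n₂ − n₃ + n₄ ≥ 0. Then (n₂, n₃, n₄, n₅) is one of exactly the six tuples (1,0,0,1), (0,1,0,1), (0,0,1,1), (1,1,1,0), (1,1,1,1), (1,1,1,2); conversely each of these six tuples satisfies all the inequalities. -/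
/-- The Diophantine system coming from the character table of the dihedral
group `D₄`: nonnegative integers `n₁, …, n₅` with `n₁ = 1` make the character
`Σᵢ nᵢ χᵢ` nonnegative on every conjugacy class with degree at least `3`
if and only if `(n₂, n₃, n₄, n₅)` is one of exactly six tuples. -/
theorem stmt6 (n₁ n₂ n₃ n₄ n₅ : ℤ) (h₁ : 0 ≤ n₁) (h₂ : 0 ≤ n₂) (h₃ : 0 ≤ n₃)
    (h₄ : 0 ≤ n₄) (h₅ : 0 ≤ n₅) (hn₁ : n₁ = 1) :
    (3 ≤ n₁ + n₂ + n₃ + n₄ + 2 * n₅ ∧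
     0 ≤ n₁ + n₂ - n₃ - n₄ ∧
     0 ≤ n₁ + n₂ + n₃ + n₄ - 2 * n₅ ∧
     0 ≤ n₁ - n₂ + n₃ - n₄ ∧
     0 ≤ n₁ - n₂ - n₃ + n₄) ↔
    (n₂, n₃, n₄, n₅) ∈ ({(1, 0, 0, 1), (0, 1, 0, 1), (0, 0, 1, 1),
      (1, 1, 1, 0), (1, 1, 1, 1), (1, 1, 1, 2)} : Set (ℤ × ℤ × ℤ × ℤ)) := by
  subst hn₁
  simp only [Set.mem_insert_iff, Set.mem_singleton_iff, Prod.mk.injEq]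
  constructor
  · rintro ⟨hdeg, hr, hr2, hs, hrs⟩
    have hn₂ : n₂ ≤ 1 := by omega
    have hn₃ : n₃ ≤ 1 := by omega
    have hn₄ : n₄ ≤ 1 := by omega
    interval_cases n₂ <;> interval_cases n₃ <;> interval_cases n₄ <;> omega
  · rintro (⟨rfl, rfl, rfl, rfl⟩ | ⟨rfl, rfl, rfl, rfl⟩ | ⟨rfl, rfl, rfl, rfl⟩ |
      ⟨rfl, rfl, rfl, rfl⟩ | ⟨rfl, rfl, rfl, rfl⟩ | ⟨rfl, rfl, rfl, rfl⟩) <;> norm_num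
end

section
/- Let n₀, n₁, n₂, n₃ be nonnegative integers with n₀ = 1 and n₀ + n₁ + n₂ + n₃ ≥ 3. Suppose that for every m ∈ {0,1,2,3} the complex number Σ_{k=0}^{3} n_k · i^{k·m} (where i is the imaginary unit) is a nonnegative real number. Then n₀ = n₁ = n₂ = n₃ = 1; conversely (1,1,1,1) satisfies all the conditions. -/
/-- The Diophantine system coming from the character table of the cyclic group
`ℤ₄` (with characters `χ_k(m) = i^{km}`): nonnegative integers `n₀, …, n₃`
with `n₀ = 1`, total degree at least `3`, and `Σ_k n_k i^{km}` a nonnegative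
real for every `m`, force `n₀ = n₁ = n₂ = n₃ = 1`; conversely `(1,1,1,1)`
satisfies all the conditions. -/
theorem stmt8 (n : Fin 4 → ℕ) :
    (n 0 = 1 ∧ 3 ≤ n 0 + n 1 + n 2 + n 3 ∧
      ∀ m : Fin 4, ∃ r : ℝ, 0 ≤ r ∧
        (∑ k : Fin 4, (n k : ℂ) * Complex.I ^ ((k : ℕ) * (m : ℕ))) = (r : ℂ)) ↔
    (∀ k : Fin 4, n k = 1) := by
  constructor
  · rintro ⟨h0, hdeg, h⟩
    obtain ⟨r, hr, h1⟩ := h 1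
    obtain ⟨s, hs, h2⟩ := h 2
    simp only [Fin.sum_univ_four, Complex.ext_iff] at h1 h2
    simp [h0, pow_succ] at h1 h2
    obtain ⟨h1re, h1im⟩ := h1
    have h13 : n 1 = n 3 := by
      have : (n 1 : ℝ) = n 3 := by linarith
      exact_mod_cast this
    have hn2 : n 2 ≤ 1 := by
      have : (n 2 : ℝ) ≤ 1 := by linarith
      exact_mod_cast this
    have hn13 : n 1 + n 3 ≤ 1 + n 2 := by
      have : (n 1 : ℝ) + n 3 ≤ 1 + n 2 := by linarith
      exact_mod_cast this
    intro k
    fin_cases k <;> simp <;> omega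
  · intro h
    refine ⟨h 0, by simp [h], fun m => ?_⟩
    fin_cases m
    · exact ⟨4, by norm_num, by simp [h]⟩
    all_goals exact ⟨0, le_rfl, by simp [Fin.sum_univ_four, h, pow_succ]⟩
end
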